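/- Fix n ∈ ℕ and let Rₙ = ℤ[√(2n+1)] and Mₙ = Rₙ[X]/(X^{2n+1}), a free Rₙ-module with basis {1, x, …, x^{2n}} where x is the image of X. Let m : Mₙ ⊗[Rₙ] Mₙ → Mₙ be the Rₙ-linear map induced by multiplication, let Δₙ : Mₙ → Mₙ ⊗[Rₙ] Mₙ be the Rₙ-linear map determined on the basis by Δₙ(xⁱ) = Σ_{j + k = 2n + i, 0 ≤ j, k ≤ 2n} xʲ ⊗ xᵏ for 0 ≤ i ≤ 2n, and let hₙ : Mₙ → Mₙ be multiplication by √(2n+1)·xⁿ. Then for every a ∈ Mₙ, m(Δₙ(a)) = (2n+1)·x^{2n}·a = hₙ(hₙ(a)); in particular hₙ² = m ∘ Δₙ, so (Mₙ, m, Δₙ, hₙ) carries a half genus map in every odd dimension 2n+1. -/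

import Mathlib

open TensorProduct Polynomial

noncomputable section

/-- `Rn n` is the ring `ℤ[√(2n+1)]`. -/
abbrev Rn (n : ℕ) : Type := Zsqrtd (2 * (n : ℤ) + 1)

/-- `Mn n` is the quotient ring `(ℤ[√(2n+1)])[X]/(X^(2n+1))`. -/
abbrev Mn (n : ℕ) : Type :=
  Polynomial (Rn n) ⧸ Ideal.span {(Polynomial.X : Polynomial (Rn n)) ^ (2 * n + 1)}

/-- `xn n` is the image of `X` in `Mn n`. -/
def xn (n : ℕ) : Mn n := Ideal.Quotient.mk _ Polynomial.X

/-
Multiplying out `Δ(xⁱ) = ∑ xʲ ⊗ xᵏ` over `j + k = d + i`, `j, k ≤ d`, replaces every summand by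
`x ^ (d + i)`, which vanishes for `i > 0` because `x ^ (d + 1) = 0`, while for `i = 0` there are
`d + 1` summands. Hence `m ∘ Δ` is multiplication by `(d + 1) • x ^ d`. For `d = 2 * n` this
element is the square of `s • x ^ n` as soon as `s * s = 2 * n + 1`.
-/

section NilpotentGenerator

variable {R A : Type*} [CommSemiring R] [Semiring A] [Algebra R A] {x : A}

theorem linearMap_ext_of_adjoin_singleton_eq_top {M : Type*} [AddCommMonoid M] [Module R M]
    (hx : Algebra.adjoin R {x} = ⊤) {f g : A →ₗ[R] M} (hfg : ∀ i, f (x ^ i) = g (x ^ i)) :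
    f = g := by
  have hspan : Submodule.span R (Submonoid.powers x : Set A) = ⊤ := by
    rw [Submonoid.powers_eq_closure, ← Algebra.adjoin_eq_span, hx, Algebra.top_toSubmodule]
  refine LinearMap.ext_on hspan ?_
  rintro _ ⟨i, rfl⟩
  exact hfg i

theorem linearMap_ext_of_adjoin_singleton_eq_top_of_pow_eq_zero {M : Type*} [AddCommMonoid M]
    [Module R M] (hx : Algebra.adjoin R {x} = ⊤) {N : ℕ} (hxN : x ^ N = 0) {f g : A →ₗ[R] M}
    (hfg : ∀ i < N, f (x ^ i) = g (x ^ i)) : f = g := by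
  refine linearMap_ext_of_adjoin_singleton_eq_top hx fun i => ?_
  rcases lt_or_ge i N with hi | hi
  · exact hfg i hi
  · rw [pow_eq_zero_of_le hi hxN, map_zero, map_zero]

theorem mul'_sum_pow_tmul_pow (x : A) {k : ℕ} {s : Finset (ℕ × ℕ)}
    (hs : ∀ p ∈ s, p.1 + p.2 = k) :
    LinearMap.mul' R A (∑ p ∈ s, (x ^ p.1) ⊗ₜ[R] (x ^ p.2)) = s.card • x ^ k := by
  rw [map_sum, ← Finset.sum_const]
  refine Finset.sum_congr rfl fun p hp => ?_
  rw [LinearMap.mul'_apply, ← pow_add, hs p hp]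

theorem filter_range_product_range_add_eq (d : ℕ) :
    (Finset.range (d + 1) ×ˢ Finset.range (d + 1)).filter (fun p => p.1 + p.2 = d) =
      Finset.HasAntidiagonal.antidiagonal d := by
  ext ⟨j, k⟩
  simp only [Finset.mem_filter, Finset.mem_product, Finset.mem_range,
    Finset.HasAntidiagonal.mem_antidiagonal]
  omega

theorem mul'_sum_pow_tmul_pow_of_pow_eq_zero {d : ℕ} (hxd : x ^ (d + 1) = 0) (i : ℕ) :
    LinearMap.mul' R A
        (∑ p ∈ (Finset.range (d + 1) ×ˢ Finset.range (d + 1)).filter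
          (fun p => p.1 + p.2 = d + i), (x ^ p.1) ⊗ₜ[R] (x ^ p.2)) =
      (d + 1) • x ^ (d + i) := by
  rw [mul'_sum_pow_tmul_pow x fun p hp => (Finset.mem_filter.mp hp).2]
  rcases i.eq_zero_or_pos with rfl | hi
  · rw [add_zero, filter_range_product_range_add_eq, Finset.Nat.card_antidiagonal]
  · rw [pow_eq_zero_of_le (Nat.add_le_add_left hi d) hxd, smul_zero, smul_zero]

theorem mul'_comp_eq_mulLeft_nsmul_pow (hx : Algebra.adjoin R {x} = ⊤) {d : ℕ}
    (hxd : x ^ (d + 1) = 0) {Δ : A →ₗ[R] A ⊗[R] A}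
    (hΔ : ∀ i ≤ d, Δ (x ^ i) =
      ∑ p ∈ (Finset.range (d + 1) ×ˢ Finset.range (d + 1)).filter (fun p => p.1 + p.2 = d + i),
        (x ^ p.1) ⊗ₜ[R] (x ^ p.2)) :
    LinearMap.mul' R A ∘ₗ Δ = LinearMap.mulLeft R ((d + 1) • x ^ d) := by
  refine linearMap_ext_of_adjoin_singleton_eq_top_of_pow_eq_zero hx hxd fun i hi => ?_
  rw [LinearMap.comp_apply, hΔ i (Nat.le_of_lt_succ hi),
    mul'_sum_pow_tmul_pow_of_pow_eq_zero hxd, LinearMap.mulLeft_apply, smul_mul_assoc, pow_add]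

theorem smul_pow_mul_smul_pow_of_mul_self_eq {s : R} {c : ℕ} (hs : s * s = c) (x : A) (n : ℕ) :
    (s • x ^ n) * (s • x ^ n) = c • x ^ (2 * n) := by
  rw [smul_mul_smul_comm, hs, ← pow_add, ← two_mul, Nat.cast_smul_eq_nsmul]

theorem stmt16_general (hx : Algebra.adjoin R {x} = ⊤) {n : ℕ} (hxn : x ^ (2 * n + 1) = 0)
    {s : R} (hs : s * s = (2 * n + 1 : ℕ)) {Δ : A →ₗ[R] A ⊗[R] A}
    (hΔ : ∀ i ≤ 2 * n, Δ (x ^ i) =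
      ∑ p ∈ (Finset.range (2 * n + 1) ×ˢ Finset.range (2 * n + 1)).filter
          (fun p => p.1 + p.2 = 2 * n + i),
        (x ^ p.1) ⊗ₜ[R] (x ^ p.2))
    {h : A →ₗ[R] A} (hh : h = LinearMap.mulLeft R (s • x ^ n)) :
    (∀ a : A, LinearMap.mul' R A (Δ a) = (2 * n + 1) • (x ^ (2 * n) * a) ∧
      (2 * n + 1) • (x ^ (2 * n) * a) = h (h a)) ∧
    h ∘ₗ h = LinearMap.mul' R A ∘ₗ Δ := by
  have mul_comul : LinearMap.mul' R A ∘ₗ Δ = LinearMap.mulLeft R ((2 * n + 1) • x ^ (2 * n)) :=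
    mul'_comp_eq_mulLeft_nsmul_pow hx hxn hΔ
  have half_genus : h ∘ₗ h = LinearMap.mulLeft R ((2 * n + 1) • x ^ (2 * n)) := by
    rw [hh, ← LinearMap.mulLeft_mul, smul_pow_mul_smul_pow_of_mul_self_eq hs]
  refine ⟨fun a => ?_, half_genus.trans mul_comul.symm⟩
  rw [← smul_mul_assoc]
  exact ⟨LinearMap.congr_fun mul_comul a, (LinearMap.congr_fun half_genus a).symm⟩

end NilpotentGenerator

theorem adjoin_singleton_quotient_mk_X {R : Type*} [CommRing R] (I : Ideal R[X]) :
    Algebra.adjoin R {Ideal.Quotient.mk I X} = ⊤ :=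
  calc Algebra.adjoin R {Ideal.Quotient.mk I X}
      = (Algebra.adjoin R {X}).map (Ideal.Quotient.mkₐ R I) :=
        (AlgHom.map_adjoin_singleton (Ideal.Quotient.mkₐ R I) X).symm
    _ = (Ideal.Quotient.mkₐ R I).range := by rw [Polynomial.adjoin_X, Algebra.map_top]
    _ = ⊤ := (AlgHom.range_eq_top _).mpr (Ideal.Quotient.mkₐ_surjective R I)

theorem xn_pow_eq_zero (n : ℕ) : xn n ^ (2 * n + 1) = 0 := by
  rw [xn, ← map_pow]
  exact Ideal.Quotient.mk_singleton_self _

theorem sqrtd_mul_sqrtd_eq_natCast (n : ℕ) :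
    (Zsqrtd.sqrtd : Rn n) * Zsqrtd.sqrtd = ((2 * n + 1 : ℕ) : Rn n) :=
  Zsqrtd.dmuld.trans (by norm_cast)

/-- In every odd dimension `2n+1`, the Frobenius algebra `Mₙ` with comultiplication
`Δₙ(xⁱ) = Σ_{j+k=2n+i, 0 ≤ j,k ≤ 2n} xʲ ⊗ xᵏ` and half genus map `hₙ` = multiplication by
`√(2n+1)·xⁿ` satisfies `m(Δₙ(a)) = (2n+1)·x^{2n}·a = hₙ(hₙ(a))` for all `a`;
in particular `hₙ² = m ∘ Δₙ`. -/
theorem stmt16 (n : ℕ)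
    (Δ : Mn n →ₗ[Rn n] Mn n ⊗[Rn n] Mn n)
    (hΔ : ∀ i ≤ 2 * n, Δ ((xn n) ^ i) =
      ∑ p ∈ (Finset.range (2 * n + 1) ×ˢ Finset.range (2 * n + 1)).filter
          (fun p => p.1 + p.2 = 2 * n + i),
        ((xn n) ^ p.1) ⊗ₜ[Rn n] ((xn n) ^ p.2))
    (h : Mn n →ₗ[Rn n] Mn n)
    (hh : h = LinearMap.mulLeft (Rn n) ((Zsqrtd.sqrtd : Rn n) • (xn n) ^ n)) :
    (∀ a : Mn n, LinearMap.mul' (Rn n) (Mn n) (Δ a) = (2 * n + 1) • ((xn n) ^ (2 * n) * a) ∧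
      (2 * n + 1) • ((xn n) ^ (2 * n) * a) = h (h a)) ∧
    h ∘ₗ h = LinearMap.mul' (Rn n) (Mn n) ∘ₗ Δ :=
  stmt16_general (adjoin_singleton_quotient_mk_X _) (xn_pow_eq_zero n)
    (sqrtd_mul_sqrtd_eq_natCast n) hΔ hh
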